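/- arXiv:2204.10462 — 2 statements merged into one kernel-verified Lean document; each statement's English description precedes it below -/
import Mathlib

section
/- For every θ ∈ T^H and every ρ > 0, the value σ*(1/g_m(θ), ρ) = (1 + 2ρ)/(1 + (1 + 1/g_m(θ))ρ), corresponding to the mass-based Braess–Sarazin relaxation, lies in the open interval (8/9, 16/9). -/
open Real Set

/-- The high-frequency set `T^H`. -/
def TH : Set (ℝ × ℝ) :=
  (Ioc (-(π/2)) (3*π/2) ×ˢ Ioc (-(π/2)) (3*π/2)) \
    (Ioc (-(π/2)) (π/2) ×ˢ Ioc (-(π/2)) (π/2))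

/-- Scaled symbol of the five-point discrete Laplacian. -/
noncomputable def chi (θ : ℝ × ℝ) : ℝ := 4 - 2 * Real.cos θ.1 - 2 * Real.cos θ.2

/-- Scaled symbol of the product of the bilinear mass matrix and the discrete Laplacian. -/
noncomputable def gm (θ : ℝ × ℝ) : ℝ :=
  chi θ * (4 + 2 * Real.cos θ.1 + 2 * Real.cos θ.2 + Real.cos θ.1 * Real.cos θ.2) / 9

/-- Third eigenvalue of the preconditioned elasticity symbol, as a function of
`t = η/χ` and `ρ = ε/λ`. -/
noncomputable def sigmaStar (t ρ : ℝ) : ℝ := (1 + 2*ρ) / (1 + (1 + t)*ρ)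

/-!
On the high frequencies at least one of `cos θ₁`, `cos θ₂` is nonpositive, and then
`8/9 ≤ g_m θ ≤ 16/9`: the upper bound is AM-GM applied to the product of the cosines, and the lower
one holds because `g_m` is concave in the other cosine, so that it suffices to check `±1`.

The value `σ*(1/g, ρ)` is the weighted harmonic mean of `1` and `g` with weights `1 + ρ` and `ρ`.
Hence it lies in every interval `(a, b)` with `a < 1 < b` whose closure contains `g`.
-/

/-- The symbol `9 g_m` of the mass matrix times the Laplacian, as a polynomial in the cosines
`x = cos θ₁` and `y = cos θ₂`. -/
def symbolCubic (x y : ℝ) : ℝ := (4 - 2 * x - 2 * y) * (4 + 2 * x + 2 * y + x * y)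

section SymbolCubic

variable {x y : ℝ}

lemma symbolCubic_comm (x y : ℝ) : symbolCubic x y = symbolCubic y x := by
  simp only [symbolCubic]
  ring

lemma symbolCubic_le_sixteen (hlower : -6 ≤ x + y) (hupper : x + y ≤ 2) :
    symbolCubic x y ≤ 16 := by
  have amgm : x * y ≤ (x + y) ^ 2 / 4 := by linarith [sq_nonneg (x - y)]
  calc symbolCubic x y
      ≤ (4 - 2 * x - 2 * y) * (4 + 2 * x + 2 * y + (x + y) ^ 2 / 4) :=
        mul_le_mul_of_nonneg_left (by linarith) (by linarith)
    _ = 16 - (x + y) ^ 2 * (x + y + 6) / 2 := by ring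
    _ ≤ 16 := sub_le_self _ (div_nonneg (mul_nonneg (sq_nonneg _) (by linarith)) zero_le_two)

lemma eight_le_symbolCubic (hx : x ∈ Icc (-1) 0) (hy : y ∈ Icc (-1) 1) :
    8 ≤ symbolCubic x y := by
  obtain ⟨hx_lower, hx_upper⟩ := hx
  have one_sub_y_nonneg : 0 ≤ 1 - y := sub_nonneg.2 hy.2
  have one_add_y_nonneg : 0 ≤ 1 + y := by linarith [hy.1]
  have at_neg_one : 0 ≤ (1 + x) * (2 - x) := mul_nonneg (by linarith) (by linarith)
  have at_one : 0 ≤ 2 + 3 * (-x * (1 + x)) := by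
    have := mul_nonneg (neg_nonneg.2 hx_upper) (by linarith : 0 ≤ 1 + x)
    linarith
  have concavity_gap : 0 ≤ 2 * (2 + x) * ((1 - y) * (1 + y)) :=
    mul_nonneg (by linarith) (mul_nonneg one_sub_y_nonneg one_add_y_nonneg)
  -- Interpolate linearly between `y = -1` and `y = 1`; the last term is the concavity gap.
  calc 8 ≤ 8 + (1 - y) * ((1 + x) * (2 - x)) + (1 + y) * (2 + 3 * (-x * (1 + x)))
        + 2 * (2 + x) * ((1 - y) * (1 + y)) := by
        linarith [mul_nonneg one_sub_y_nonneg at_neg_one, mul_nonneg one_add_y_nonneg at_one]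
    _ = symbolCubic x y := by rw [symbolCubic]; ring

end SymbolCubic

section MassSymbol

variable {θ : ℝ × ℝ}

lemma cos_nonpos_or_cos_nonpos_of_mem_TH (hθ : θ ∈ TH) : cos θ.1 ≤ 0 ∨ cos θ.2 ≤ 0 := by
  have cos_nonpos {t : ℝ} (ht : t ∈ Ioc (-(π / 2)) (3 * π / 2) \ Ioc (-(π / 2)) (π / 2)) :
      cos t ≤ 0 := by
    have half_pi_lt : π / 2 < t := lt_of_not_ge fun h ↦ ht.2 ⟨ht.1.1, h⟩
    exact cos_nonpos_of_pi_div_two_le_of_le half_pi_lt.le (by linarith [ht.1.2])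
  rw [TH, prod_sdiff_prod] at hθ
  exact hθ.symm.imp (fun h ↦ cos_nonpos h.1) (fun h ↦ cos_nonpos h.2)

lemma gm_eq_symbolCubic_div (θ : ℝ × ℝ) : gm θ = symbolCubic (cos θ.1) (cos θ.2) / 9 := rfl

lemma gm_le (θ : ℝ × ℝ) : gm θ ≤ 16 / 9 := by
  rw [gm_eq_symbolCubic_div]
  gcongr
  exact symbolCubic_le_sixteen (by linarith [neg_one_le_cos θ.1, neg_one_le_cos θ.2])
    (by linarith [cos_le_one θ.1, cos_le_one θ.2])

lemma le_gm_of_cos_nonpos (hθ : cos θ.1 ≤ 0 ∨ cos θ.2 ≤ 0) : 8 / 9 ≤ gm θ := by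
  rw [gm_eq_symbolCubic_div]
  gcongr
  rcases hθ with hfst | hsnd
  · exact eight_le_symbolCubic ⟨neg_one_le_cos θ.1, hfst⟩ (cos_mem_Icc θ.2)
  · rw [symbolCubic_comm]
    exact eight_le_symbolCubic ⟨neg_one_le_cos θ.2, hsnd⟩ (cos_mem_Icc θ.1)

end MassSymbol

section HarmonicMean

variable {a b g ρ : ℝ}

lemma sigmaStar_one_div_eq_harmonic_mean (g ρ : ℝ) :
    sigmaStar (1 / g) ρ = ((1 + ρ) + ρ) / ((1 + ρ) + ρ / g) := by
  rw [sigmaStar]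
  congr 1 <;> ring

lemma lt_sigmaStar_one_div (hg : 0 < g) (hρ : 0 ≤ ρ) (ha : a < 1) (hag : a ≤ g) :
    a < sigmaStar (1 / g) ρ := by
  rw [sigmaStar_one_div_eq_harmonic_mean, lt_div_iff₀ (by positivity)]
  calc a * ((1 + ρ) + ρ / g) = a * (1 + ρ) + a * (ρ / g) := mul_add _ _ _
    _ < 1 * (1 + ρ) + g * (ρ / g) := add_lt_add_of_lt_of_le (by gcongr) (by gcongr)
    _ = (1 + ρ) + ρ := by rw [one_mul, mul_div_cancel₀ ρ hg.ne']

lemma sigmaStar_one_div_lt (hg : 0 < g) (hρ : 0 ≤ ρ) (hb : 1 < b) (hgb : g ≤ b) :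
    sigmaStar (1 / g) ρ < b := by
  rw [sigmaStar_one_div_eq_harmonic_mean, div_lt_iff₀ (by positivity)]
  calc (1 + ρ) + ρ = 1 * (1 + ρ) + g * (ρ / g) := by rw [one_mul, mul_div_cancel₀ ρ hg.ne']
    _ < b * (1 + ρ) + b * (ρ / g) := add_lt_add_of_lt_of_le (by gcongr) (by gcongr)
    _ = b * ((1 + ρ) + ρ / g) := (mul_add _ _ _).symm

end HarmonicMean

theorem stmt_10 : ∀ θ ∈ TH, ∀ ρ : ℝ, 0 < ρ →
    sigmaStar (1 / gm θ) ρ ∈ Set.Ioo (8/9 : ℝ) (16/9) := by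
  intro θ hθ ρ hρ
  have gm_lower : 8 / 9 ≤ gm θ :=
    le_gm_of_cos_nonpos (cos_nonpos_or_cos_nonpos_of_mem_TH hθ)
  have gm_pos : 0 < gm θ := lt_of_lt_of_le (by norm_num) gm_lower
  exact ⟨lt_sigmaStar_one_div gm_pos hρ.le (by norm_num) gm_lower,
    sigmaStar_one_div_lt gm_pos hρ.le (by norm_num) (gm_le θ)⟩
end

section
/- For every θ ∈ T^H and every ρ > 0, the value σ*(1/g_v(θ), ρ) = (1 + 2ρ)/(1 + (1 + 1/g_v(θ))ρ), corresponding to the Vanka-based Braess–Sarazin relaxation, lies in the open interval (3/4, 4/3). -/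
open Real Set

/-- Scaled symbol of the product of the element-wise Vanka operator and the discrete Laplacian. -/
noncomputable def gv (θ : ℝ × ℝ) : ℝ :=
  chi θ * (7 + 2 * Real.cos θ.1 + 2 * Real.cos θ.2 + Real.cos θ.1 * Real.cos θ.2) / 24

/-!
Writing `g = gv θ`, the eigenvalue `(1 + 2ρ) / (1 + (1 + 1/g)ρ)` is the mediant of
`(1 + ρ) / (1 + ρ) = 1` and `ρ / (ρ/g) = g`, so it lies strictly between `1` and `g` (and equals `1`
if `g = 1`). Since `1` is an interior point of `[3/4, 4/3]`, it suffices that `gv` maps high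
frequencies into this closed interval.
-/

theorem sigmaStar_one_div_mem_openSegment {g ρ : ℝ} (hg : 0 < g) (hρ : 0 < ρ) :
    sigmaStar (1 / g) ρ ∈ openSegment ℝ 1 g := by
  have hD : 0 < 1 + ρ + ρ / g := by positivity
  refine ⟨(1 + ρ) / (1 + ρ + ρ / g), ρ / g / (1 + ρ + ρ / g), by positivity, by positivity, ?_, ?_⟩
  · rw [← add_div, div_self hD.ne']
  · have hden : 1 + (1 + 1 / g) * ρ = 1 + ρ + ρ / g := by ring
    have hnum : ρ / g * g = ρ := div_mul_cancel₀ ρ hg.ne'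
    rw [sigmaStar, hden, smul_eq_mul, smul_eq_mul, mul_one, div_mul_eq_mul_div, hnum, ← add_div]
    ring

theorem gv_swap (θ : ℝ × ℝ) : gv θ.swap = gv θ := by
  simp only [gv, chi, Prod.fst_swap, Prod.snd_swap]
  ring

theorem gv_le_four_thirds (θ : ℝ × ℝ) : gv θ ≤ 4 / 3 := by
  set a := cos θ.1 with ha
  set b := cos θ.2 with hb
  -- For a fixed sum `a + b`, `gv` is largest at `a = b`.
  have hdecomp : gv θ = 4 / 3 - ((a + b + 2) ^ 3 + (2 - a - b) * (a - b) ^ 2) / 48 := by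
    rw [gv, chi, ← ha, ← hb]
    ring
  have hsum : 0 ≤ a + b + 2 := by linarith [neg_one_le_cos θ.1, neg_one_le_cos θ.2]
  have hdiff : 0 ≤ 2 - a - b := by linarith [cos_le_one θ.1, cos_le_one θ.2]
  rw [hdecomp]
  exact sub_le_self _ (by positivity)

theorem three_fourths_le_gv_of_cos_fst_nonpos {θ : ℝ × ℝ} (hθ : cos θ.1 ≤ 0) : 3 / 4 ≤ gv θ := by
  set a := cos θ.1 with ha
  set b := cos θ.2 with hb
  -- `gv` is concave in `b`: interpolate its values at `b = ±1`.
  have hdecomp :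
      gv θ = 3 / 4 + (-a * (2 + a) * (2 + b) + (1 - b) * (3 + (2 + a) * (1 + b))) / 12 := by
    rw [gv, chi, ← ha, ← hb]
    ring
  have ha_neg : 0 ≤ -a := neg_nonneg.mpr hθ
  have ha_add : 0 ≤ 2 + a := by linarith [neg_one_le_cos θ.1]
  have hb_add : 0 ≤ 1 + b := by linarith [neg_one_le_cos θ.2]
  have hb_add_two : 0 ≤ 2 + b := by linarith
  have hb_sub : 0 ≤ 1 - b := sub_nonneg.mpr (cos_le_one θ.2)
  rw [hdecomp]
  exact le_add_of_nonneg_right (by positivity)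

theorem cos_nonpos_of_mem_TH {θ : ℝ × ℝ} (hθ : θ ∈ TH) : cos θ.1 ≤ 0 ∨ cos θ.2 ≤ 0 := by
  obtain ⟨⟨⟨h₁, h₁'⟩, ⟨h₂, h₂'⟩⟩, hlow⟩ := hθ
  have hhigh : π / 2 ≤ θ.1 ∨ π / 2 ≤ θ.2 := by
    by_contra! h
    exact hlow ⟨⟨h₁, h.1.le⟩, ⟨h₂, h.2.le⟩⟩
  exact hhigh.imp (cos_nonpos_of_pi_div_two_le_of_le · (by linarith))
    (cos_nonpos_of_pi_div_two_le_of_le · (by linarith))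

theorem gv_mem_Icc_of_mem_TH {θ : ℝ × ℝ} (hθ : θ ∈ TH) : gv θ ∈ Icc (3 / 4 : ℝ) (4 / 3) := by
  refine ⟨?_, gv_le_four_thirds θ⟩
  rcases cos_nonpos_of_mem_TH hθ with hfst | hsnd
  · exact three_fourths_le_gv_of_cos_fst_nonpos hfst
  · rw [← gv_swap]
    exact three_fourths_le_gv_of_cos_fst_nonpos hsnd

theorem stmt_11 : ∀ θ ∈ TH, ∀ ρ : ℝ, 0 < ρ →
    sigmaStar (1 / gv θ) ρ ∈ Set.Ioo (3/4 : ℝ) (4/3) := by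
  intro θ hθ ρ hρ
  have hgv : gv θ ∈ Icc (3 / 4 : ℝ) (4 / 3) := gv_mem_Icc_of_mem_TH hθ
  have hpos : 0 < gv θ := lt_of_lt_of_le (by norm_num) hgv.1
  have hone : (1 : ℝ) ∈ interior (Icc (3 / 4 : ℝ) (4 / 3)) := by
    rw [interior_Icc]
    norm_num
  rw [← interior_Icc]
  exact (convex_Icc _ _).openSegment_interior_self_subset_interior hone hgv
    (sigmaStar_one_div_mem_openSegment hpos hρ)
end
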